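/- arXiv:math/0107034 — 2 statements merged into one kernel-verified Lean document; each statement's English description precedes it below -/
import Mathlib

section
/- Let R be a commutative ring, A an associative unital R-algebra, and a, b ∈ A elements satisfying a*a = 0, b*b = 0, a*b*a = 0 and b*a*b = 0. Then for all scalars x, y, s, t ∈ R: (1 + (x*t)•a) * (1 + ((x+y)*s)•b) * (1 + (y*t)•a) = (1 + (y*s)•b) * (1 + ((x+y)*t)•a) * (1 + (x*s)•b). (Generalized Verma identity in the unipotent case, where ln(1+t a) = t a and ln(1+s b) = s b.) -/
section

variable {R A : Type*} [NonAssocSemiring A] {a b : A}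

theorem one_add_mul_one_add_mul_one_add_of_mul_eq_zero {u v w : A}
    (huw : u * w = 0) (huvw : u * v * w = 0) :
    (1 + u) * (1 + v) * (1 + w) = 1 + (u + w) + v + u * v + v * w := by
  simp only [add_mul, mul_add, one_mul, mul_one, huw, huvw]
  abel

theorem one_add_smul_mul_one_add_smul_mul_one_add_smul [Semiring R] [Module R A]
    [IsScalarTower R A A] [SMulCommClass R A A]
    (ha : a * a = 0) (haba : a * b * a = 0) (p q r : R) :
    (1 + p • a) * (1 + q • b) * (1 + r • a) =
      1 + (p + r) • a + q • b + (p * q) • (a * b) + (q * r) • (b * a) := by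
  have hpr : (p • a) * (r • a) = 0 := by rw [smul_mul_smul_comm, ha, smul_zero]
  have hpqr : (p • a) * (q • b) * (r • a) = 0 := by
    rw [smul_mul_smul_comm, smul_mul_smul_comm, haba, smul_zero]
  rw [one_add_mul_one_add_mul_one_add_of_mul_eq_zero hpr hpqr, add_smul,
    smul_mul_smul_comm, smul_mul_smul_comm]

theorem verma_identity_unipotent_general [CommSemiring R] [Module R A]
    [IsScalarTower R A A] [SMulCommClass R A A]
    (ha : a * a = 0) (hb : b * b = 0) (haba : a * b * a = 0) (hbab : b * a * b = 0)
    (x y s t : R) :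
    (1 + (x * t) • a) * (1 + ((x + y) * s) • b) * (1 + (y * t) • a) =
      (1 + (y * s) • b) * (1 + ((x + y) * t) • a) * (1 + (x * s) • b) := by
  have coeff_a : x * t + y * t = (x + y) * t := by ring
  have coeff_b : y * s + x * s = (x + y) * s := by ring
  have coeff_ab : x * t * ((x + y) * s) = (x + y) * t * (x * s) := by ring
  have coeff_ba : (x + y) * s * (y * t) = y * s * ((x + y) * t) := by ring
  rw [one_add_smul_mul_one_add_smul_mul_one_add_smul ha haba,
    one_add_smul_mul_one_add_smul_mul_one_add_smul hb hbab,
    coeff_a, coeff_b, coeff_ab, coeff_ba]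
  abel

end

/-- **Generalized Verma identity in the unipotent case.**
If `a b` in an associative unital `R`-algebra satisfy `a² = 0`, `b² = 0`,
`a*b*a = 0`, `b*a*b = 0`, then for all scalars `x y s t : R`,
`(1 + (xt)•a)(1 + ((x+y)s)•b)(1 + (yt)•a) = (1 + (ys)•b)(1 + ((x+y)t)•a)(1 + (xs)•b)`. -/
theorem verma_identity_unipotent
    {R : Type*} {A : Type*} [CommRing R] [Ring A] [Algebra R A]
    (a b : A) (ha : a * a = 0) (hb : b * b = 0)
    (haba : a * b * a = 0) (hbab : b * a * b = 0) :
    ∀ x y s t : R,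
      (1 + (x * t) • a) * (1 + ((x + y) * s) • b) * (1 + (y * t) • a) =
        (1 + (y * s) • b) * (1 + ((x + y) * t) • a) * (1 + (x * s) • b) :=
  verma_identity_unipotent_general ha hb haba hbab
end

section
/- Define φ : Matrix (Fin 2) (Fin 2) ℝ → M₃ by sending m to the block matrix whose (1,1) entry is −trace(m), whose remaining first row and first column entries are 0, and whose lower-right 2×2 block is m. Then: (i) φ is an injective ℝ-linear map satisfying φ(⁅m,n⁆) = ⁅φ(m), φ(n)⁆ for all m, n (a Lie algebra embedding of gl(2) into sl(3)); (ii) the image of φ is contained in P, where P is the ℝ-linear span of {H13, H23, E 1 2, E 1 3, E 2 3, E 3 2}; and (iii) P is the internal direct sum of the image of φ and the span T of {E 1 2, E 1 3} (so that P ≅ gl(2) ⋉ t(2), the algebra of two-dimensional motions extended by gl(2)). -/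
open Matrix

/-- `M₃` is the space of real 3×3 matrices. -/
abbrev M₃ := Matrix (Fin 3) (Fin 3) ℝ

/-- `E i j` (with `1 ≤ i, j ≤ 3`) is the matrix unit with `1` in entry `(i,j)`. -/
noncomputable def E (i j : ℕ) : M₃ :=
  Matrix.of fun a b => if a.val + 1 = i ∧ b.val + 1 = j then (1 : ℝ) else 0

/-- The Cartan generator `H13⊥`. -/
noncomputable def H13 : M₃ := (1/3 : ℝ) • E 1 1 - (2/3 : ℝ) • E 2 2 + (1/3 : ℝ) • E 3 3

/-- The Cartan generator `H23⊥`. -/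
noncomputable def H23 : M₃ := (2/3 : ℝ) • E 1 1 - (1/3 : ℝ) • E 2 2 - (1/3 : ℝ) • E 3 3

/-- The parabolic subalgebra `P = span{H13, H23, E₁₂, E₁₃, E₂₃, E₃₂}`. -/
noncomputable def P : Submodule ℝ M₃ :=
  Submodule.span ℝ ({H13, H23, E 1 2, E 1 3, E 2 3, E 3 2} : Set M₃)

/-- The translation part `T = span{E₁₂, E₁₃}`. -/
noncomputable def T : Submodule ℝ M₃ := Submodule.span ℝ ({E 1 2, E 1 3} : Set M₃)

/-- `φ` sends a 2×2 matrix `m` to the 3×3 block matrix with `(1,1)` entry `-trace m`,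
zeros elsewhere in the first row and column, and lower-right 2×2 block `m`. -/
noncomputable def φ (m : Matrix (Fin 2) (Fin 2) ℝ) : M₃ :=
  Matrix.of fun i j =>
    Fin.cases (Fin.cases (-(Matrix.trace m)) (fun _ => 0) j)
      (fun i' => Fin.cases 0 (fun j' => m i' j') j) i

/-!
A traceless matrix stabilizing the line of the first basis vector is block upper triangular, and
its corner entry is minus the trace of its lower-right block `m`. Subtracting `diag(-tr m, m)`
leaves only a row, which gives the direct sum. Since commutators are traceless and the corner is a
scalar, `m ↦ diag(-tr m, m)` respects brackets.
-/

section BlockMatrices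

variable {R n : Type*} [CommRing R]

/-- The embedding `m ↦ diag(-tr m, m)` of `gl(n)` into `sl(1 + n)`, with values in block matrices
indexed by `Fin 1 ⊕ n`. -/
def glToSl [Fintype n] : Matrix n n R →ₗ[R] Matrix (Fin 1 ⊕ n) (Fin 1 ⊕ n) R where
  toFun m := fromBlocks !![-trace m] 0 0 m
  map_add' m m' := by simp [fromBlocks_add, add_comm]
  map_smul' c m := by simp [fromBlocks_smul]

/-- The stabilizer in `sl(1 + n)` of the line spanned by the first basis vector, a maximal
parabolic subalgebra, encoded as a submodule of the block matrices. -/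
def lineStabilizer [Fintype n] : Submodule R (Matrix (Fin 1 ⊕ n) (Fin 1 ⊕ n) R) where
  carrier := {A | (∀ i, A (.inr i) (.inl 0) = 0) ∧ trace A = 0}
  zero_mem' := by simp
  add_mem' := by simp +contextual
  smul_mem' := by simp +contextual

/-- The abelian algebra `t(n)` of translations: block matrices supported in the upper-right row. -/
def rowTranslations : Submodule R (Matrix (Fin 1 ⊕ n) (Fin 1 ⊕ n) R) where
  carrier := {A | A (.inl 0) (.inl 0) = 0 ∧ ∀ i j, A (.inr i) j = 0}
  zero_mem' := by simp
  add_mem' := by simp +contextual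
  smul_mem' := by simp +contextual

variable [Fintype n]

theorem glToSl_injective :
    Function.Injective (glToSl : Matrix n n R → Matrix (Fin 1 ⊕ n) (Fin 1 ⊕ n) R) :=
  fun _ _ h ↦ (fromBlocks_inj.1 h).2.2.2

theorem glToSl_lie (m m' : Matrix n n R) : glToSl ⁅m, m'⁆ = ⁅glToSl m, glToSl m'⁆ := by
  have corner_lie : !![-trace ⁅m, m'⁆] = ⁅!![-trace m], !![-trace m']⁆ := by
    rw [LieAlgebra.matrix_trace_commutator_zero]
    ext
    simp [Ring.lie_def, mul_comm]
  change fromBlocks !![-trace ⁅m, m'⁆] 0 0 ⁅m, m'⁆ = _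
  rw [corner_lie]
  simp [glToSl, Ring.lie_def, fromBlocks_multiply, sub_eq_add_neg, fromBlocks_neg, fromBlocks_add]

theorem glToSl_mem_lineStabilizer (m : Matrix n n R) : glToSl m ∈ lineStabilizer :=
  ⟨fun _ ↦ rfl, by simp [glToSl, trace]⟩

theorem rowTranslations_le_lineStabilizer :
    rowTranslations ≤ (lineStabilizer : Submodule R (Matrix (Fin 1 ⊕ n) (Fin 1 ⊕ n) R)) :=
  fun _ ⟨hcorner, hrows⟩ ↦ ⟨fun i ↦ hrows i _, by simp [trace, hcorner, hrows]⟩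

theorem sub_glToSl_toBlocks₂₂_mem_rowTranslations {A : Matrix (Fin 1 ⊕ n) (Fin 1 ⊕ n) R}
    (hA : A ∈ lineStabilizer) : A - glToSl A.toBlocks₂₂ ∈ rowTranslations := by
  obtain ⟨hcol, htrace⟩ := hA
  refine ⟨?_, fun i j ↦ ?_⟩
  · simpa [glToSl, trace, toBlocks₂₂] using htrace
  · rcases j with j | j
    · simp [glToSl, Subsingleton.elim j 0, hcol]
    · simp [glToSl, toBlocks₂₂]

theorem range_glToSl_sup_rowTranslations :
    LinearMap.range (glToSl : Matrix n n R →ₗ[R] _) ⊔ rowTranslations = lineStabilizer := by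
  refine le_antisymm (sup_le ?_ rowTranslations_le_lineStabilizer) fun A hA ↦ ?_
  · rintro _ ⟨m, rfl⟩
    exact glToSl_mem_lineStabilizer m
  · exact Submodule.mem_sup.2 ⟨_, ⟨A.toBlocks₂₂, rfl⟩, _,
      sub_glToSl_toBlocks₂₂_mem_rowTranslations hA, add_sub_cancel _ _⟩

theorem disjoint_range_glToSl_rowTranslations :
    Disjoint (LinearMap.range (glToSl : Matrix n n R →ₗ[R] _)) rowTranslations := by
  rw [Submodule.disjoint_def]
  rintro _ ⟨m, rfl⟩ ⟨-, hrows⟩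
  have hm : m = 0 := by
    ext i j
    exact hrows i (.inr j)
  rw [hm, map_zero]

end BlockMatrices

/-- The splitting of the three indices of `M₃` as `1 + 2`. -/
def blockIndex : Fin 1 ⊕ Fin 2 ≃ Fin 3 := finSumFinEquiv

/-- The identification of `1 + 2` block matrices with `M₃`, as algebras. -/
def blockEquiv : Matrix (Fin 1 ⊕ Fin 2) (Fin 1 ⊕ Fin 2) ℝ ≃ₐ[ℝ] M₃ :=
  reindexAlgEquiv ℝ ℝ blockIndex

theorem φ_eq_blockEquiv_comp_glToSl : φ = blockEquiv ∘ glToSl := by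
  ext m i j
  fin_cases i <;> fin_cases j <;> rfl

theorem φ_lie (m n : Matrix (Fin 2) (Fin 2) ℝ) : φ ⁅m, n⁆ = ⁅φ m, φ n⁆ := by
  simp only [φ_eq_blockEquiv_comp_glToSl, Function.comp_apply]
  rw [glToSl_lie, Ring.lie_def, map_sub, map_mul, map_mul, Ring.lie_def]

theorem span_range_φ :
    Submodule.span ℝ (Set.range φ) = (LinearMap.range glToSl).map blockEquiv.toLinearMap := by
  rw [φ_eq_blockEquiv_comp_glToSl, ← LinearMap.range_comp]
  exact Submodule.span_eq (LinearMap.range (blockEquiv.toLinearMap ∘ₗ glToSl))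

theorem mem_map_lineStabilizer {A : M₃} :
    A ∈ lineStabilizer.map blockEquiv.toLinearMap ↔ (A 1 0 = 0 ∧ A 2 0 = 0) ∧ trace A = 0 := by
  refine (Submodule.mem_map_equiv (e := blockEquiv.toLinearEquiv) _).trans (and_congr ?_ ?_)
  · exact Fin.forall_fin_two
  · exact Iff.of_eq (congrArg (· = 0) (blockIndex.sum_comp fun i ↦ A i i))

theorem mem_map_rowTranslations {A : M₃} :
    A ∈ rowTranslations.map blockEquiv.toLinearMap ↔
      A 0 0 = 0 ∧ (∀ j, A 1 j = 0) ∧ ∀ j, A 2 j = 0 := by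
  refine (Submodule.mem_map_equiv (e := blockEquiv.toLinearEquiv) _).trans
    (and_congr Iff.rfl (Fin.forall_fin_two.trans (and_congr ?_ ?_)))
  · exact blockIndex.forall_congr_right (q := (A 1 · = 0))
  · exact blockIndex.forall_congr_right (q := (A 2 · = 0))

theorem eq_combination_of_mem_map_lineStabilizer {A : M₃}
    (hA : A ∈ lineStabilizer.map blockEquiv.toLinearMap) :
    A = (A 2 2 - A 1 1) • H13 + (-A 1 1 - 2 * A 2 2) • H23 + A 0 1 • E 1 2 + A 0 2 • E 1 3 +
      A 1 2 • E 2 3 + A 2 1 • E 3 2 := by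
  obtain ⟨⟨h₁, h₂⟩, htrace⟩ := mem_map_lineStabilizer.1 hA
  have hcorner : A 0 0 = -A 1 1 - A 2 2 := by
    rw [trace_fin_three] at htrace
    linarith
  ext i j
  fin_cases i <;> fin_cases j <;> simp [H13, H23, E, h₁, h₂, hcorner] <;> ring

theorem P_eq_map_lineStabilizer : P = lineStabilizer.map blockEquiv.toLinearMap := by
  refine le_antisymm (Submodule.span_le.2 ?_) fun A hA ↦ ?_
  · rintro A (rfl | rfl | rfl | rfl | rfl | rfl) <;>
      rw [SetLike.mem_coe, mem_map_lineStabilizer] <;>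
      simp [H13, H23, E, trace_fin_three] <;> norm_num
  · rw [eq_combination_of_mem_map_lineStabilizer hA]
    refine add_mem (add_mem (add_mem (add_mem (add_mem ?_ ?_) ?_) ?_) ?_) ?_ <;>
    exact P.smul_mem _ (Submodule.subset_span (by simp))

theorem T_eq_map_rowTranslations : T = rowTranslations.map blockEquiv.toLinearMap := by
  refine le_antisymm (Submodule.span_le.2 ?_) fun A hA ↦ ?_
  · rintro A (rfl | rfl) <;> rw [SetLike.mem_coe, mem_map_rowTranslations] <;> simp [E]
  · obtain ⟨hcorner, h₁, h₂⟩ := mem_map_rowTranslations.1 hA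
    refine Submodule.mem_span_pair.2 ⟨A 0 1, A 0 2, ?_⟩
    ext i j
    fin_cases i <;> fin_cases j <;> simp [E, hcorner, h₁, h₂]

/-- `φ` is an injective linear Lie-algebra embedding of `gl(2)` into `sl(3)` with image
inside the parabolic subalgebra `P`, and `P` is the internal direct sum of the image
of `φ` and `T = span{E₁₂, E₁₃}` (so `P ≅ gl(2) ⋉ t(2)`, the algebra of two-dimensional
motions extended by `gl(2)`). -/
theorem gl2_embeds_and_P_is_motion_algebra :
    Function.Injective φ ∧
    (∀ m n : Matrix (Fin 2) (Fin 2) ℝ, φ (m + n) = φ m + φ n) ∧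
    (∀ (c : ℝ) (m : Matrix (Fin 2) (Fin 2) ℝ), φ (c • m) = c • φ m) ∧
    (∀ m n : Matrix (Fin 2) (Fin 2) ℝ, φ ⁅m, n⁆ = ⁅φ m, φ n⁆) ∧
    (∀ m : Matrix (Fin 2) (Fin 2) ℝ, φ m ∈ P) ∧
    Submodule.span ℝ (Set.range φ) ⊔ T = P ∧
    Submodule.span ℝ (Set.range φ) ⊓ T = ⊥ := by
  have blockEquiv_injective : Function.Injective blockEquiv.toLinearMap := blockEquiv.injective
  rw [span_range_φ, P_eq_map_lineStabilizer, T_eq_map_rowTranslations]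
  refine ⟨?_, fun m n ↦ ?_, fun c m ↦ ?_, φ_lie, fun m ↦ ?_, ?_, ?_⟩
  · rw [φ_eq_blockEquiv_comp_glToSl]
    exact blockEquiv_injective.comp glToSl_injective
  · simp only [φ_eq_blockEquiv_comp_glToSl, Function.comp_apply, map_add]
  · simp only [φ_eq_blockEquiv_comp_glToSl, Function.comp_apply, map_smul]
  · rw [φ_eq_blockEquiv_comp_glToSl]
    exact Submodule.mem_map_of_mem (glToSl_mem_lineStabilizer m)
  · rw [← Submodule.map_sup, range_glToSl_sup_rowTranslations]
  · exact (Submodule.disjoint_map blockEquiv_injective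
      disjoint_range_glToSl_rowTranslations).eq_bot
end
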